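/- Let n ≥ 3 be an even natural number and let CL_n be the circular ladder graph on 2n vertices (the Cartesian product of the cycle C_n with a single edge). Then the number of proper 3-edge-colorings of CL_n equals 2^n + 8. -/

import Mathlib

/-- The circular ladder graph `CL_n`: vertices `(ZMod n) × Bool`, with `(i,b)`
adjacent to `(j,c)` iff (`b = c` and (`j = i + 1` or `i = j + 1`)) or (`b ≠ c` and `i = j`). -/
def circularLadder (n : ℕ) : SimpleGraph (ZMod n × Bool) :=
  SimpleGraph.fromRel (fun p q =>
    (p.2 = q.2 ∧ (q.1 = p.1 + 1 ∨ p.1 = q.1 + 1)) ∨ (p.2 ≠ q.2 ∧ p.1 = q.1))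

/-- A Tait coloring (proper 3-edge-coloring): distinct edges sharing a vertex get
different colors in `ZMod 3`. -/
def IsTaitColoring {V : Type*} (G : SimpleGraph V) (C : G.edgeSet → ZMod 3) : Prop :=
  ∀ e₁ e₂ : G.edgeSet, e₁ ≠ e₂ →
    (∃ v : V, v ∈ (e₁ : Sym2 V) ∧ v ∈ (e₂ : Sym2 V)) → C e₁ ≠ C e₂

/-- The number of proper 3-edge-colorings of `G`. -/
noncomputable def numTaitColorings {V : Type*} (G : SimpleGraph V) : ℕ :=
  Nat.card {C : G.edgeSet → ZMod 3 // IsTaitColoring G C}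

/-!
Record a Tait coloring by the pairs of colors of the two rail edges ending at each position. If the
pairs before and after a rung are `(a, b)` and `(c, d)`, then `a ≠ c` and `b ≠ d`, and the third
colors `-(a + c)` and `-(b + d)` agree, both being the color of the rung. Hence either `a = b` and
`c = d`, or `a ≠ b` and `(c, d) = (b, a)`, and the same alternative holds all around the ladder. So
a Tait coloring is either a proper `3`-coloring of a cycle of length `n`, of which there are
`2 ^ n + 2 (-1) ^ n` by deletion–contraction, or the orbit of an ordered pair of distinct colors
under the swap, of which there are `6` for even `n` and none for odd `n`.
-/

section CycleColoring

variable {α : Type*} {n : ℕ}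

/-- Sequences with distinct consecutive terms: the proper vertex colorings of the path with `n + 1`
vertices. -/
def IsPathColoring (f : Fin (n + 1) → α) : Prop :=
  ∀ i : Fin n, f i.castSucc ≠ f i.succ

/-- Sequences with distinct cyclically consecutive terms: the proper vertex colorings of a cycle.
The index type `ι` is meant to be `Fin (n + 1)` or `ZMod n`. A cycle with one vertex is a loop,
which has no proper coloring. -/
def IsCycleColoring {ι : Type*} [Add ι] [One ι] (f : ι → α) : Prop :=
  ∀ i, f i ≠ f (i + 1)

lemma isPathColoring_snoc {f : Fin (n + 1) → α} {a : α} :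
    IsPathColoring (Fin.snoc f a : Fin (n + 2) → α) ↔
      IsPathColoring f ∧ f (Fin.last n) ≠ a := by
  simp only [IsPathColoring, Fin.forall_fin_succ', Fin.snoc_castSucc, Fin.succ_last, Fin.snoc_last,
    Fin.succ_castSucc]

lemma isCycleColoring_iff_isPathColoring {f : Fin (n + 1) → α} :
    IsCycleColoring f ↔ IsPathColoring f ∧ f (Fin.last n) ≠ f 0 := by
  simp only [IsCycleColoring, IsPathColoring, Fin.forall_fin_succ', Fin.coeSucc_eq_succ,
    Fin.last_add_one]

lemma natCard_subtype_ne [Finite α] (a : α) : (Nat.card {b // a ≠ b} : ℤ) = Nat.card α - 1 := by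
  classical
  have h : Nat.card {b // a = b} + Nat.card {b // a ≠ b} = Nat.card α := by
    rw [← Nat.card_sum]
    exact Nat.card_congr (Equiv.sumCompl (a = ·))
  rw [← h]
  simp

/-- Splitting off the last vertex of a path. -/
def pathColoringSuccEquiv (n : ℕ) :
    {f : Fin (n + 2) → α // IsPathColoring f} ≃
      Σ f : {f : Fin (n + 1) → α // IsPathColoring f}, {a // f.1 (Fin.last n) ≠ a} where
  toFun f := ⟨⟨Fin.init f.1, fun i => f.2 i.castSucc⟩, f.1 (Fin.last _), f.2 (Fin.last n)⟩
  invFun p := ⟨Fin.snoc p.1.1 p.2.1, isPathColoring_snoc.2 ⟨p.1.2, p.2.2⟩⟩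
  left_inv f := Subtype.ext (Fin.snoc_init_self f.1)
  right_inv _ :=
    Sigma.subtype_ext (Subtype.ext (Fin.init_snoc (α := fun _ => α) _ _))
      (Fin.snoc_last (α := fun _ => α) _ _)

lemma natCard_isPathColoring [Finite α] (n : ℕ) :
    (Nat.card {f : Fin (n + 1) → α // IsPathColoring f} : ℤ) =
      Nat.card α * ((Nat.card α : ℤ) - 1) ^ n := by
  induction n with
  | zero => simp [IsPathColoring, Nat.card_fun]
  | succ n ih =>
    have := Fintype.ofFinite {f : Fin (n + 1) → α // IsPathColoring f}
    rw [Nat.card_congr (pathColoringSuccEquiv n), Nat.card_sigma]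
    push_cast
    simp only [natCard_subtype_ne, Finset.sum_const, Finset.card_univ, nsmul_eq_mul,
      ← Nat.card_eq_fintype_card, ih, pow_succ, mul_assoc]

/-- Identifying the two ends of a path: the contraction half of deletion–contraction on a cycle. -/
def closedPathColoringEquiv (n : ℕ) :
    {f : Fin (n + 2) → α // IsPathColoring f ∧ f (Fin.last _) = f 0} ≃
      {f : Fin (n + 1) → α // IsCycleColoring f} where
  toFun f := ⟨Fin.init f.1, isCycleColoring_iff_isPathColoring.2
    ⟨fun i => f.2.1 i.castSucc, fun h => f.2.1 (Fin.last n) (h.trans f.2.2.symm)⟩⟩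
  invFun f := ⟨Fin.snoc f.1 (f.1 0), isPathColoring_snoc.2
    (isCycleColoring_iff_isPathColoring.1 f.2), by simp⟩
  left_inv f := Subtype.ext <| by
    change Fin.snoc (Fin.init f.1) (f.1 0) = f.1
    rw [← f.2.2, Fin.snoc_init_self]
  right_inv f := Subtype.ext (Fin.init_snoc (α := fun _ => α) _ _)

lemma natCard_isCycleColoring_add [Finite α] (n : ℕ) :
    Nat.card {f : Fin (n + 2) → α // IsCycleColoring f} +
        Nat.card {f : Fin (n + 1) → α // IsCycleColoring f} =
      Nat.card {f : Fin (n + 2) → α // IsPathColoring f} := by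
  simp only [isCycleColoring_iff_isPathColoring (n := n + 1)]
  rw [← Nat.card_congr (closedPathColoringEquiv n), add_comm]
  exact Set.ncard_inter_add_ncard_sdiff_eq_ncard {f : Fin (n + 2) → α | IsPathColoring f}
    {f | f (Fin.last _) = f 0}

lemma natCard_isCycleColoring [Finite α] (n : ℕ) :
    (Nat.card {f : Fin (n + 1) → α // IsCycleColoring f} : ℤ) =
      ((Nat.card α : ℤ) - 1) ^ (n + 1) + (-1) ^ (n + 1) * ((Nat.card α : ℤ) - 1) := by
  induction n with
  | zero => simp [IsCycleColoring]
  | succ n ih =>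
    have h := congrArg (Nat.cast (R := ℤ)) (natCard_isCycleColoring_add (α := α) n)
    push_cast [natCard_isPathColoring, ih] at h
    linear_combination h

lemma natCard_cyclic_diagonal (α : Type*) [Finite α] (n : ℕ) [NeZero n] :
    (Nat.card {g : ZMod n → α × α // ∀ i, (g i).1 = (g i).2 ∧ (g i).1 ≠ (g (i + 1)).1} : ℤ) =
      ((Nat.card α : ℤ) - 1) ^ n + (-1) ^ n * ((Nat.card α : ℤ) - 1) := by
  let e : {g : ZMod n → α × α // ∀ i, (g i).1 = (g i).2 ∧ (g i).1 ≠ (g (i + 1)).1} ≃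
      {f : ZMod n → α // IsCycleColoring f} :=
    { toFun g := ⟨fun i => (g.1 i).1, fun i => (g.2 i).2⟩
      invFun f := ⟨fun i => (f.1 i, f.1 i), fun i => ⟨rfl, f.2 i⟩⟩
      left_inv g := Subtype.ext (funext fun i => Prod.ext rfl (g.2 i).1)
      right_inv _ := rfl }
  rw [Nat.card_congr e]
  obtain ⟨k, rfl⟩ := Nat.exists_eq_add_one_of_ne_zero (NeZero.ne n)
  exact natCard_isCycleColoring k

end CycleColoring

section CyclicOrbit

variable {β : Type*} {n : ℕ}

/-- A cyclic sequence in `s` that moves by `f` is determined by its initial term, which is an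
`n`-periodic point of `f`. -/
def cyclicOrbitEquiv [NeZero n] {f : β → β} {s : Set β} (hs : Set.MapsTo f s s) :
    {g : ZMod n → β // ∀ i, g i ∈ s ∧ g (i + 1) = f (g i)} ≃
      {x // x ∈ s ∧ Function.IsPeriodicPt f n x} where
  toFun g := ⟨g.1 0, (g.2 0).1, by
    have h : Function.Semiconj g.1 (· + 1) f := fun i => (g.2 i).2
    have h0 : Function.IsPeriodicPt (· + 1) n (0 : ZMod n) := by
      simp [Function.IsPeriodicPt, Function.IsFixedPt]
    exact h0.map h⟩
  invFun x := ⟨fun i => f^[i.val] x, fun i => ⟨hs.iterate _ x.2.1, by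
    beta_reduce
    rw [← Function.iterate_succ_apply' f, ← x.2.2.iterate_mod_apply (i.val + 1), ZMod.val_add,
      ZMod.val_one_eq_one_mod, Nat.add_mod_mod]⟩⟩
  left_inv g := by
    have h : Function.Semiconj g.1 (· + 1) f := fun i => (g.2 i).2
    refine Subtype.ext (funext fun i => ?_)
    simp [← h.iterate_right _ _]
  right_inv x := Subtype.ext (by simp)

lemma natCard_isPeriodicPt_swap (α : Type*) [Finite α] (n : ℕ) :
    (Nat.card {p : α × α // p.1 ≠ p.2 ∧ Function.IsPeriodicPt Prod.swap n p} : ℤ) =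
      if Even n then Nat.card α * ((Nat.card α : ℤ) - 1) else 0 := by
  split_ifs with hn
  · have h (p : α × α) : Function.IsPeriodicPt Prod.swap n p :=
      congrFun (Function.Involutive.iterate_even Prod.swap_swap hn) p
    have := Fintype.ofFinite α
    simp only [h, and_true]
    rw [Nat.card_congr (Equiv.subtypeProdEquivSigmaSubtype fun a b : α => a ≠ b), Nat.card_sigma]
    simp [natCard_subtype_ne, mul_sub]
  · have h (p : α × α) (hp : p.1 ≠ p.2) : ¬ Function.IsPeriodicPt Prod.swap n p := by
      rw [Function.IsPeriodicPt, Function.Involutive.iterate_odd Prod.swap_swap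
        (Nat.not_even_iff_odd.1 hn)]
      exact fun h => hp (congrArg Prod.snd h)
    have : IsEmpty {p : α × α // p.1 ≠ p.2 ∧ Function.IsPeriodicPt Prod.swap n p} :=
      ⟨fun p => h p.1 p.2.1 p.2.2⟩
    simp

lemma natCard_cyclic_swap (α : Type*) [Finite α] (n : ℕ) [NeZero n] :
    (Nat.card {g : ZMod n → α × α // ∀ i, (g i).1 ≠ (g i).2 ∧ g (i + 1) = (g i).swap} : ℤ) =
      if Even n then Nat.card α * ((Nat.card α : ℤ) - 1) else 0 := by
  have hswap : Set.MapsTo Prod.swap {p : α × α | p.1 ≠ p.2} {p | p.1 ≠ p.2} := fun _ => Ne.symm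
  rw [← natCard_isPeriodicPt_swap]
  exact congrArg Nat.cast (Nat.card_congr (cyclicOrbitEquiv hswap))

end CyclicOrbit

lemma zmod_three_pairwise_ne_iff :
    ∀ x y z : ZMod 3, x ≠ y ∧ x ≠ z ∧ y ≠ z ↔ x ≠ y ∧ z = -(x + y) := by
  decide

lemma injOn_triple_iff {α β : Type*} {f : α → β} {a b c : α} (hab : a ≠ b) (hac : a ≠ c)
    (hbc : b ≠ c) : Set.InjOn f {a, b, c} ↔ f a ≠ f b ∧ f a ≠ f c ∧ f b ≠ f c := by
  rw [Set.injOn_insert (by simp [hab, hac]), Set.injOn_pair]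
  grind

lemma isTaitColoring_iff_forall_injOn {V : Type*} {G : SimpleGraph V} {C : G.edgeSet → ZMod 3} :
    IsTaitColoring G C ↔ ∀ v, Set.InjOn C {e | v ∈ (e : Sym2 V)} := by
  constructor
  · intro h v e₁ h₁ e₂ h₂ hC
    by_contra hne
    exact h e₁ e₂ hne ⟨v, h₁, h₂⟩ hC
  · rintro h e₁ e₂ hne ⟨v, h₁, h₂⟩ hC
    exact hne (h v h₁ h₂ hC)

namespace circularLadder

variable {n : ℕ}

/-- The edges of the circular ladder: `Sum.inl (i, b)` is the rail edge ending at `(i, b)`, so that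
`(i, b)` lies on the rail edges `(i, b)` and `(i + 1, b)`, and `Sum.inr i` is the rung at `i`. -/
def edge : (ZMod n × Bool) ⊕ ZMod n → Sym2 (ZMod n × Bool)
  | Sum.inl (i, b) => s((i - 1, b), (i, b))
  | Sum.inr i => s((i, false), (i, true))

lemma mem_edge {v : ZMod n × Bool} {x : (ZMod n × Bool) ⊕ ZMod n} :
    v ∈ edge x ↔ x = Sum.inl v ∨ x = Sum.inl (v.1 + 1, v.2) ∨ x = Sum.inr v.1 := by
  obtain ⟨i, b⟩ := v
  rcases x with ⟨j, c⟩ | j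
  · grind [edge]
  · cases b <;> simp [edge, eq_comm]

lemma adj_iff [Nontrivial (ZMod n)] {i j : ZMod n} {b c : Bool} :
    (circularLadder n).Adj (i, b) (j, c) ↔
      (b = c ∧ (j = i + 1 ∨ i = j + 1)) ∨ (b ≠ c ∧ i = j) := by
  have : i ≠ i + 1 := by simp
  rw [circularLadder, SimpleGraph.fromRel_adj]
  grind

lemma range_edge [Nontrivial (ZMod n)] :
    Set.range (edge (n := n)) = (circularLadder n).edgeSet := by
  ext e
  constructor
  · rintro ⟨⟨i, b⟩ | i, rfl⟩ <;> simp [edge, adj_iff]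
  · induction e with | _ p q
    obtain ⟨i, b⟩ := p
    obtain ⟨j, c⟩ := q
    rw [SimpleGraph.mem_edgeSet, adj_iff]
    rintro (⟨rfl, rfl | rfl⟩ | ⟨hbc, rfl⟩)
    · exact ⟨Sum.inl (i + 1, b), by simp [edge]⟩
    · exact ⟨Sum.inl (j + 1, b), by simp [edge, Sym2.eq_swap]⟩
    · exact ⟨Sum.inr i, by cases b <;> cases c <;> simp_all [edge]⟩

lemma edge_injective (h : (2 : ZMod n) ≠ 0) : Function.Injective (edge (n := n)) := by
  rintro (⟨i, b⟩ | i) (⟨j, c⟩ | j) hij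
  · obtain ⟨⟨-, rfl⟩, rfl, -⟩ | ⟨⟨hi, rfl⟩, hj, -⟩ := by simpa [edge] using hij
    · rfl
    · exact absurd (by linear_combination hj - hi) h
  · grind [edge]
  · grind [edge]
  · simpa [edge] using hij

/-- The indexing of the edge set by `edge`. -/
noncomputable def edgeEquiv (h : (2 : ZMod n) ≠ 0) :
    (ZMod n × Bool) ⊕ ZMod n ≃ (circularLadder n).edgeSet :=
  have := nontrivial_of_ne _ _ h
  (Equiv.ofInjective edge (edge_injective h)).trans (Equiv.setCongr range_edge)

lemma coe_edgeEquiv (h : (2 : ZMod n) ≠ 0) (x : (ZMod n × Bool) ⊕ ZMod n) :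
    (edgeEquiv h x : Sym2 (ZMod n × Bool)) = edge x :=
  rfl

/-- The conditions on a coloring of the edge indices to come from a Tait coloring: at `(i, b)` the
two rail edges differ in color and the rung has the third color, as the three colors sum to `0`. -/
def IsProperLabeling (c : (ZMod n × Bool) ⊕ ZMod n → ZMod 3) : Prop :=
  ∀ i b, c (Sum.inl (i, b)) ≠ c (Sum.inl (i + 1, b)) ∧
    c (Sum.inr i) = -(c (Sum.inl (i, b)) + c (Sum.inl (i + 1, b)))

lemma isTaitColoring_iff (h : (2 : ZMod n) ≠ 0) {C : (circularLadder n).edgeSet → ZMod 3} :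
    IsTaitColoring (circularLadder n) C ↔ IsProperLabeling (C ∘ edgeEquiv h) := by
  have := nontrivial_of_ne _ _ h
  rw [isTaitColoring_iff_forall_injOn, Prod.forall]
  refine forall₂_congr fun i b => ?_
  have hstar : {e : (circularLadder n).edgeSet | (i, b) ∈ (e : Sym2 _)} =
      edgeEquiv h '' {Sum.inl (i, b), Sum.inl (i + 1, b), Sum.inr i} := by
    refine Set.ext fun e => ?_
    obtain ⟨x, rfl⟩ := (edgeEquiv h).surjective e
    simp [coe_edgeEquiv, mem_edge]
  rw [hstar, ← (edgeEquiv h).injective.injOn.comp_iff, ← zmod_three_pairwise_ne_iff]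
  exact injOn_triple_iff (by simp) (by simp) (by simp)

/-- The pairs `p` and `q` of colors of the rail edges before and after a rung leave a color for the
rung: the third color is the same on both rails. -/
def RungCompatible (p q : ZMod 3 × ZMod 3) : Prop :=
  p.1 ≠ q.1 ∧ p.2 ≠ q.2 ∧ p.1 + q.1 = p.2 + q.2

/-- A Tait coloring is determined by its values on the rails. -/
def labelingEquiv :
    {c : (ZMod n × Bool) ⊕ ZMod n → ZMod 3 // IsProperLabeling c} ≃
      {g : ZMod n → ZMod 3 × ZMod 3 // ∀ i, RungCompatible (g i) (g (i + 1))} where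
  toFun c := ⟨fun i => (c.1 (Sum.inl (i, false)), c.1 (Sum.inl (i, true))), fun i =>
    ⟨(c.2 i false).1, (c.2 i true).1, neg_injective ((c.2 i false).2.symm.trans (c.2 i true).2)⟩⟩
  invFun g := ⟨Sum.elim (fun v => if v.2 then (g.1 v.1).2 else (g.1 v.1).1)
    fun i => -((g.1 i).1 + (g.1 (i + 1)).1), by
      rintro i (_ | _)
      · exact ⟨(g.2 i).1, rfl⟩
      · exact ⟨(g.2 i).2.1, congrArg Neg.neg (g.2 i).2.2⟩⟩
  left_inv c := by
    refine Subtype.ext (funext ?_)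
    rintro (⟨i, _ | _⟩ | i)
    · rfl
    · rfl
    · exact (c.2 i false).2.symm
  right_inv _ := rfl

lemma rungCompatible_iff : ∀ {p q : ZMod 3 × ZMod 3}, RungCompatible p q ↔
    (p.1 = p.2 ∧ q.1 = q.2 ∧ p.1 ≠ q.1) ∨ (p.1 ≠ p.2 ∧ q = p.swap) := by
  unfold RungCompatible
  decide

lemma forall_rungCompatible_iff {g : ZMod n → ZMod 3 × ZMod 3} :
    (∀ i, RungCompatible (g i) (g (i + 1))) ↔
      (∀ i, (g i).1 = (g i).2 ∧ (g i).1 ≠ (g (i + 1)).1) ∨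
        ∀ i, (g i).1 ≠ (g i).2 ∧ g (i + 1) = (g i).swap := by
  simp only [rungCompatible_iff]
  constructor
  · intro h
    have hper : Function.Periodic (fun i => (g i).1 = (g i).2) 1 := by
      intro i
      grind
    have hconst i : ((g i).1 = (g i).2) = ((g 0).1 = (g 0).2) := by
      simpa using hper.int_mul_eq (i.cast : ℤ)
    grind
  · grind

lemma natCard_forall_rungCompatible (n : ℕ) [NeZero n] :
    (Nat.card {g : ZMod n → ZMod 3 × ZMod 3 // ∀ i, RungCompatible (g i) (g (i + 1))} : ℤ) =
      2 ^ n + 3 + 5 * (-1) ^ n := by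
  classical
  have hdisj : Disjoint
      (fun g : ZMod n → ZMod 3 × ZMod 3 => ∀ i, (g i).1 = (g i).2 ∧ (g i).1 ≠ (g (i + 1)).1)
      (fun g => ∀ i, (g i).1 ≠ (g i).2 ∧ g (i + 1) = (g i).swap) :=
    Pi.disjoint_iff.2 fun _ => Prop.disjoint_iff.2 fun h => (h.2 0).1 (h.1 0).1
  simp only [forall_rungCompatible_iff]
  rw [Nat.card_congr (subtypeOrEquiv _ _ hdisj), Nat.card_sum, Nat.cast_add,
    natCard_cyclic_diagonal, natCard_cyclic_swap, Nat.card_zmod]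
  rcases n.even_or_odd with hn | hn
  · rw [if_pos hn, hn.neg_one_pow]
    ring
  · rw [if_neg (Nat.not_even_iff_odd.2 hn), hn.neg_one_pow]
    ring

lemma numTaitColorings_eq_natCard (h : (2 : ZMod n) ≠ 0) :
    numTaitColorings (circularLadder n) =
      Nat.card {g : ZMod n → ZMod 3 × ZMod 3 // ∀ i, RungCompatible (g i) (g (i + 1))} :=
  Nat.card_congr <| (((edgeEquiv h).symm.arrowCongr (Equiv.refl _)).subtypeEquiv
    fun _ => isTaitColoring_iff h).trans labelingEquiv

end circularLadder

theorem numTaitColorings_circularLadder_even_general (n : ℕ) (hn : 3 ≤ n) :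
    (numTaitColorings (circularLadder n) : ℤ) = 2 ^ n + 3 + 5 * (-1) ^ n := by
  have : NeZero n := ⟨by omega⟩
  have h2 : (2 : ZMod n) ≠ 0 := fun h =>
    absurd (Nat.le_of_dvd two_pos ((ZMod.natCast_eq_zero_iff 2 n).1 h)) (by omega)
  rw [circularLadder.numTaitColorings_eq_natCard h2,
    circularLadder.natCard_forall_rungCompatible]

/-- For even `n ≥ 3`, the circular ladder graph `CL_n` has exactly `2 ^ n + 8`
proper 3-edge-colorings. -/
theorem numTaitColorings_circularLadder_even (n : ℕ) (hn : 3 ≤ n) (hpar : Even n) :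
    numTaitColorings (circularLadder n) = 2 ^ n + 8 := by
  zify
  rw [numTaitColorings_circularLadder_even_general n hn, hpar.neg_one_pow]
  ring
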